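/- For every fixed N ∈ ℕ there exist constants C, x₀ > 0 such that for all 0 < x < x₀, |Σ_{n≥1} λ(n)/(e^{nπx}+1) + (√2−1)/(2√x) − 1/2| ≤ C·x^N. -/

import Mathlib

open Real

/-- The Liouville function `λ(n) = (-1)^Ω(n)`. -/
def liouville (n : ℕ) : ℤ := (-1) ^ n.primeFactorsList.length

/-!
Write `q = exp (-πx)`. Since `1 / (q⁻ⁿ + 1) = qⁿ / (1 - qⁿ) - 2 q²ⁿ / (1 - q²ⁿ)`, the sum is
`L(q) - 2 L(q²)`, where `L` is the Lambert series of `λ`. The divisor sums of `λ` form the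
indicator function of the squares, so `L(q) = ∑ q^(j²)` over `j ≥ 1`, which is `(θ(x) - 1) / 2` for
the theta function `θ(x) = ∑ exp (-πj²x)` over `j ∈ ℤ`. Hence the sum equals
`1/2 + θ(x)/2 - θ(2x)`, and the modular relation `θ(x) = θ(1/x) / √x` shows that `θ(x) - 1/√x` is
smaller than every power of `x` as `x ↓ 0`.
-/

open Filter Topology Asymptotics HurwitzZeta
open scoped ArithmeticFunction.zeta

section SquareIndicator

theorem isSquare_mul_iff_of_isUnit_gcd {α : Type*} [CommMonoidWithZero α] [GCDMonoid α]
    [Subsingleton αˣ] {a b : α} (hab : IsUnit (gcd a b)) :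
    IsSquare (a * b) ↔ IsSquare a ∧ IsSquare b := by
  refine ⟨fun h => ?_, fun h => h.1.mul h.2⟩
  obtain ⟨c, hc⟩ := (isSquare_iff_exists_sq _).1 h
  obtain ⟨d, rfl⟩ := exists_eq_pow_of_mul_eq_pow hab hc
  obtain ⟨e, rfl⟩ := exists_eq_pow_of_mul_eq_pow ((gcd_comm' _ _).isUnit hab)
    ((mul_comm _ _).trans hc)
  exact ⟨.sq d, .sq e⟩

theorem isSquare_prime_pow_iff {p k : ℕ} (hp : p.Prime) : IsSquare (p ^ k) ↔ Even k := by
  refine ⟨?_, fun hk => hk.isSquare_pow p⟩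
  rintro ⟨c, hc⟩
  obtain ⟨i, -, rfl⟩ := (Nat.dvd_prime_pow hp).1 ⟨c, hc⟩
  rw [← pow_add] at hc
  exact ⟨i, Nat.pow_right_injective hp.two_le hc⟩

/-- The indicator function of the positive squares, as an arithmetic function; its Dirichlet series
is `ζ(2s)`. -/
def squareIndicator (R : Type*) [Semiring R] : ArithmeticFunction R where
  toFun n := if n ≠ 0 ∧ IsSquare n then 1 else 0
  map_zero' := by simp

variable {R : Type*}

theorem squareIndicator_apply [Semiring R] {n : ℕ} (hn : n ≠ 0) :
    squareIndicator R n = if IsSquare n then 1 else 0 := by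
  simp [squareIndicator, hn]

theorem isMultiplicative_squareIndicator [Semiring R] :
    (squareIndicator R).IsMultiplicative := by
  refine ArithmeticFunction.IsMultiplicative.iff_ne_zero.2
    ⟨by simp [squareIndicator_apply], fun {m n} hm hn hmn => ?_⟩
  have hmul : IsSquare (m * n) ↔ IsSquare m ∧ IsSquare n :=
    isSquare_mul_iff_of_isUnit_gcd (Nat.isUnit_iff.2 hmn)
  simp only [squareIndicator_apply, hm, hn, mul_ne_zero, ne_eq, not_false_eq_true, hmul, ite_and,
    ite_mul, one_mul, zero_mul]

theorem zeta_mul_liouville [CommRing R] :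
    (ζ : ArithmeticFunction R) * (ArithmeticFunction.liouville : ArithmeticFunction R) =
      squareIndicator R := by
  refine (ArithmeticFunction.IsMultiplicative.eq_iff_eq_on_prime_powers _
    (ArithmeticFunction.isMultiplicative_zeta.natCast.mul
      ArithmeticFunction.isMultiplicative_liouville.intCast) _
    isMultiplicative_squareIndicator).2 fun p k hp => ?_
  have hpow (i : ℕ) : (ArithmeticFunction.liouville (p ^ i) : R) = (-1) ^ i := by
    simp [ArithmeticFunction.liouville_apply, hp.ne_zero,
      ArithmeticFunction.cardFactors_apply_prime_pow hp]
  simp only [ArithmeticFunction.coe_zeta_mul_apply, ArithmeticFunction.intCoe_apply,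
    Nat.sum_divisors_prime_pow hp, hpow, neg_one_geom_sum, Nat.even_add_one, ite_not,
    squareIndicator_apply (pow_ne_zero k hp.ne_zero), isSquare_prime_pow_iff hp]

theorem tsum_squareIndicator_mul [Semiring R] [TopologicalSpace R] (g : ℕ → R) :
    ∑' n : ℕ+, squareIndicator R n * g n = ∑' j : ℕ+, g (j ^ 2) := by
  have hinj : Function.Injective fun j : ℕ+ => j ^ 2 := pow_left_injective two_ne_zero
  rw [← hinj.tsum_eq]
  · simp [squareIndicator_apply, IsSquare.sq]
  · intro n hn
    have hsq : IsSquare (n : ℕ) := by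
      by_contra h
      simp [squareIndicator_apply, h] at hn
    obtain ⟨r, hr⟩ := (isSquare_iff_exists_sq _).1 hsq
    have hr0 : 0 < r := Nat.pos_of_ne_zero fun h => n.ne_zero (by simp [hr, h])
    exact ⟨r.toPNat hr0, PNat.coe_injective hr.symm⟩

end SquareIndicator

section LambertSeries

variable {𝕜 : Type*} [NormedField 𝕜] {q : 𝕜}

/-- The Lambert series `∑ f(n) qⁿ / (1 - qⁿ)`, over `n ≥ 1`, of an arithmetic function `f`. -/
noncomputable def lambertSeries (f : ArithmeticFunction 𝕜) (q : 𝕜) : 𝕜 :=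
  ∑' n : ℕ+, f n * (q ^ (n : ℕ) / (1 - q ^ (n : ℕ)))

theorem norm_pow_pnat_lt_one (hq : ‖q‖ < 1) (n : ℕ+) : ‖q ^ (n : ℕ)‖ < 1 := by
  simpa using pow_lt_one₀ (norm_nonneg q) hq n.ne_zero

theorem hasSum_pow_mul_pnat (hq : ‖q‖ < 1) (n : ℕ+) :
    HasSum (fun m : ℕ+ => q ^ (n * m : ℕ)) (q ^ (n : ℕ) / (1 - q ^ (n : ℕ))) := by
  rw [hasSum_pnat_iff_hasSum_succ (f := fun m => q ^ (n * m : ℕ))]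
  simpa only [pow_mul, pow_succ', div_eq_mul_inv] using
    (hasSum_geometric_of_norm_lt_one (norm_pow_pnat_lt_one hq n)).mul_left (q ^ (n : ℕ))

theorem div_one_add_eq_sub {u : 𝕜} (hu : ‖u‖ < 1) :
    u / (1 + u) = u / (1 - u) - 2 * (u ^ 2 / (1 - u ^ 2)) := by
  have hsub : 1 - u ≠ 0 := sub_ne_zero.2 fun h => by simp [← h] at hu
  have hadd : 1 + u ≠ 0 := fun h => by simp [← neg_eq_of_add_eq_zero_right h] at hu
  have hsq : 1 - u ^ 2 = (1 - u) * (1 + u) := by ring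
  rw [hsq]
  field_simp
  ring

theorem summable_norm_liouville_mul_pow (hq : ‖q‖ < 1) :
    Summable fun n => ‖(ArithmeticFunction.liouville : ArithmeticFunction 𝕜) n‖ * ‖q‖ ^ n := by
  refine .of_nonneg_of_le (fun _ => by positivity) (fun n => ?_)
    (summable_geometric_of_lt_one (norm_nonneg q) hq)
  rcases eq_or_ne n 0 with rfl | hn
  · simp
  · simp [ArithmeticFunction.liouville_apply hn]

variable [CompleteSpace 𝕜] {f : ArithmeticFunction 𝕜}

theorem summable_mul_pow_mul_pnat (hf : Summable fun n => ‖f n‖ * ‖q‖ ^ n) (hq : ‖q‖ < 1) :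
    Summable fun c : ℕ+ × ℕ+ => f c.1 * q ^ (c.1 * c.2 : ℕ) := by
  have hf' : Summable fun n : ℕ+ => ‖f n‖ * ‖q‖ ^ (n : ℕ) :=
    hf.comp_injective PNat.coe_injective
  have hgeom : Summable fun m : ℕ+ => ‖q‖ ^ m.natPred :=
    (summable_geometric_of_lt_one (norm_nonneg q) hq).comp_injective PNat.natPred_injective
  refine .of_norm_bounded (hf'.mul_of_nonneg hgeom (fun _ => by positivity) fun _ => by positivity)
    fun c => ?_
  have hexp : (c.1 : ℕ) + c.2.natPred ≤ c.1 * c.2 := by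
    rw [← c.2.natPred_add_one]
    nlinarith [c.1.pos]
  rw [norm_mul, norm_pow, mul_assoc, ← pow_add]
  exact mul_le_mul_of_nonneg_left (pow_le_pow_of_le_one (norm_nonneg q) hq.le hexp) (norm_nonneg _)

theorem hasSum_lambertSeries (hf : Summable fun n => ‖f n‖ * ‖q‖ ^ n) (hq : ‖q‖ < 1) :
    HasSum (fun n : ℕ+ => f n * (q ^ (n : ℕ) / (1 - q ^ (n : ℕ)))) (lambertSeries f q) :=
  ((summable_mul_pow_mul_pnat hf hq).hasSum.prod_fiberwise fun n =>
    (hasSum_pow_mul_pnat hq n).mul_left (f n)).summable.hasSum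

theorem lambertSeries_eq_tsum_zeta_mul (hf : Summable fun n => ‖f n‖ * ‖q‖ ^ n) (hq : ‖q‖ < 1) :
    lambertSeries f q = ∑' n : ℕ+, ((ζ : ArithmeticFunction 𝕜) * f) n * q ^ (n : ℕ) := by
  have hs := summable_mul_pow_mul_pnat hf hq
  have hrows := hs.hasSum.prod_fiberwise fun n => (hasSum_pow_mul_pnat hq n).mul_left (f n)
  have hfibre (n : ℕ+) : HasSum (fun c : (n : ℕ).divisorsAntidiagonal => f c.1.1 * q ^ (n : ℕ))
      (((ζ : ArithmeticFunction 𝕜) * f) n * q ^ (n : ℕ)) := by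
    rw [ArithmeticFunction.coe_zeta_mul_apply, ← Nat.sum_divisorsAntidiagonal fun d _ => f d,
      Finset.sum_mul]
    exact Finset.hasSum _ fun c : ℕ × ℕ => f c.1 * q ^ (n : ℕ)
  have hdivisors := (sigmaAntidiagonalEquivProd.hasSum_iff.2 hs.hasSum).sigma fun n =>
    (hfibre n).congr_fun fun c => by
      simp [sigmaAntidiagonalEquivProd, divisorsAntidiagonalFactors,
        (Nat.mem_divisorsAntidiagonal.1 c.2).1]
  exact hrows.tsum_eq.trans hdivisors.tsum_eq.symm

theorem tsum_mul_pow_div_one_add_pow (hf : Summable fun n => ‖f n‖ * ‖q‖ ^ n) (hq : ‖q‖ < 1) :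
    ∑' n : ℕ+, f n * (q ^ (n : ℕ) / (1 + q ^ (n : ℕ))) =
      lambertSeries f q - 2 * lambertSeries f (q ^ 2) := by
  have hq2 : ‖q ^ 2‖ ≤ ‖q‖ := by
    simpa using pow_le_of_le_one (norm_nonneg q) hq.le two_ne_zero
  have hf2 : Summable fun n => ‖f n‖ * ‖q ^ 2‖ ^ n :=
    .of_nonneg_of_le (fun _ => by positivity) (fun _ => by gcongr) hf
  refine HasSum.tsum_eq (((hasSum_lambertSeries hf hq).sub
    ((hasSum_lambertSeries hf2 (hq2.trans_lt hq)).mul_left 2)).congr_fun fun n => ?_)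
  rw [div_one_add_eq_sub (norm_pow_pnat_lt_one hq n), ← pow_mul, ← pow_mul, mul_comm 2]
  ring

theorem lambertSeries_liouville (hq : ‖q‖ < 1) :
    lambertSeries (ArithmeticFunction.liouville : ArithmeticFunction 𝕜) q =
      ∑' j : ℕ+, q ^ (j ^ 2 : ℕ) := by
  rw [lambertSeries_eq_tsum_zeta_mul (summable_norm_liouville_mul_pow hq) hq, zeta_mul_liouville,
    tsum_squareIndicator_mul (q ^ ·)]

end LambertSeries

section Theta

/-- The theta function `θ(x) = ∑ exp (-πj²x)` over `j ∈ ℤ`, encoded as a Hurwitz kernel. -/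
local notation "θ" => evenKernel 0

theorem norm_exp_neg_pi_mul_lt_one {x : ℝ} (hx : 0 < x) : ‖exp (-π * x)‖ < 1 := by
  rw [norm_of_nonneg (exp_pos _).le, exp_lt_one_iff, neg_mul, neg_lt_zero]
  positivity

theorem tsum_exp_pow_sq_eq_theta {x : ℝ} (hx : 0 < x) :
    ∑' j : ℕ+, exp (-π * x) ^ (j ^ 2 : ℕ) = (θ x - 1) / 2 := by
  rw [tsum_pnat_eq_tsum_succ (f := fun j => exp (-π * x) ^ (j ^ 2)),
    evenKernel_eq_cosKernel_of_zero]
  refine (((hasSum_nat_cosKernel₀ 0 hx).div_const 2).congr_fun fun j => ?_).tsum_eq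
  rw [← exp_nat_mul]
  simp only [mul_zero, zero_mul, cos_zero, mul_one, mul_div_cancel_left₀ _ (two_ne_zero' ℝ)]
  push_cast
  ring_nf

theorem theta_sub_inv_sqrt_isBigO_rpow (r : ℝ) :
    (fun x => θ x - 1 / √x) =O[𝓝[>] 0] (· ^ r) := by
  refine Complex.isBigO_ofReal_left.1 (((hurwitzEvenFEPair 0).hf_zero r).congr' ?_ .rfl)
  filter_upwards [self_mem_nhdsWithin] with x hx
  simp [hurwitzEvenFEPair, sqrt_eq_rpow, rpow_neg (le_of_lt hx)]

theorem lambertSeries_liouville_eq_theta {x : ℝ} (hx : 0 < x) :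
    lambertSeries (ArithmeticFunction.liouville : ArithmeticFunction ℝ) (exp (-π * x)) =
      (θ x - 1) / 2 := by
  rw [lambertSeries_liouville (norm_exp_neg_pi_mul_lt_one hx), tsum_exp_pow_sq_eq_theta hx]

/-- The sum of `λ(n)` against the Fermi–Dirac weights `1 / (exp (nπx) + 1)`, over `n ≥ 1`. -/
noncomputable def liouvilleFermiSum (x : ℝ) : ℝ :=
  ∑' n : ℕ, (liouville (n + 1) : ℝ) / (exp (((n : ℝ) + 1) * π * x) + 1)

theorem liouville_eq_arithmeticFunction_liouville {n : ℕ} (hn : n ≠ 0) :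
    liouville n = ArithmeticFunction.liouville n := by
  rw [liouville, ArithmeticFunction.liouville_apply hn, ArithmeticFunction.cardFactors_apply]

theorem liouvilleFermiSum_eq_tsum_pnat (x : ℝ) :
    liouvilleFermiSum x = ∑' n : ℕ+, (ArithmeticFunction.liouville : ArithmeticFunction ℝ) n *
      (exp (-π * x) ^ (n : ℕ) / (1 + exp (-π * x) ^ (n : ℕ))) := by
  rw [tsum_pnat_eq_tsum_succ (f := fun n : ℕ =>
    (ArithmeticFunction.liouville : ArithmeticFunction ℝ) n *
      (exp (-π * x) ^ n / (1 + exp (-π * x) ^ n)))]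
  refine tsum_congr fun n => ?_
  have hexp : exp (((n : ℝ) + 1) * π * x) = (exp (-π * x) ^ (n + 1))⁻¹ := by
    rw [← exp_nat_mul, ← exp_neg]
    push_cast
    ring_nf
  rw [ArithmeticFunction.intCoe_apply,
    ← liouville_eq_arithmeticFunction_liouville n.succ_ne_zero, hexp]
  field_simp

theorem liouvilleFermiSum_eq_theta {x : ℝ} (hx : 0 < x) :
    liouvilleFermiSum x = 1 / 2 + θ x / 2 - θ (2 * x) := by
  have hq := norm_exp_neg_pi_mul_lt_one hx
  have hsq : exp (-π * x) ^ 2 = exp (-π * (2 * x)) := by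
    rw [← exp_nat_mul]
    ring_nf
  rw [liouvilleFermiSum_eq_tsum_pnat,
    tsum_mul_pow_div_one_add_pow (summable_norm_liouville_mul_pow hq) hq, hsq,
    lambertSeries_liouville_eq_theta hx, lambertSeries_liouville_eq_theta (by positivity)]
  ring

theorem isBigO_rpow_comp_const_mul {E : Type*} [Norm E] {g : ℝ → E} {r c : ℝ} (hc : 0 < c)
    (hg : g =O[𝓝[>] 0] (· ^ r)) : (fun x => g (c * x)) =O[𝓝[>] 0] (· ^ r) := by
  have hscale : Tendsto (fun x : ℝ => c * x) (𝓝[>] 0) (𝓝[>] 0) :=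
    tendsto_iff_comap.2 (comap_mulLeft_nhdsGT_zero hc).ge
  refine (hg.comp_tendsto hscale).trans (.of_bound (c ^ r) ?_)
  filter_upwards [self_mem_nhdsWithin] with x hx
  simp [mul_rpow hc.le (le_of_lt hx), abs_of_pos (rpow_pos_of_pos hc r)]

theorem liouvilleFermiSum_isBigO_rpow (r : ℝ) :
    (fun x => liouvilleFermiSum x + (√2 - 1) / (2 * √x) - 1 / 2) =O[𝓝[>] 0] (· ^ r) := by
  have h₁ := theta_sub_inv_sqrt_isBigO_rpow r
  have h₂ := isBigO_rpow_comp_const_mul two_pos h₁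
  refine ((h₁.const_mul_left (1 / 2)).sub h₂).congr' ?_ .rfl
  filter_upwards [self_mem_nhdsWithin] with x hx
  have hsqrt : √(2 * x) = √2 * √x := sqrt_mul (by norm_num) x
  have hx' : √x ≠ 0 := (sqrt_pos.2 hx).ne'
  rw [liouvilleFermiSum_eq_theta hx, hsqrt]
  field_simp
  linear_combination -sq_sqrt (show (0 : ℝ) ≤ 2 by norm_num)

end Theta

theorem main_theorem (N : ℕ) :
    ∃ C x₀ : ℝ, 0 < C ∧ 0 < x₀ ∧ ∀ x : ℝ, 0 < x → x < x₀ →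
      |(∑' n : ℕ, (liouville (n + 1) : ℝ) / (Real.exp (((n : ℝ) + 1) * π * x) + 1)) +
          (Real.sqrt 2 - 1) / (2 * Real.sqrt x) - 1 / 2| ≤ C * x ^ N := by
  obtain ⟨C, hC, hbound⟩ := (liouvilleFermiSum_isBigO_rpow N).exists_pos
  obtain ⟨x₀, hx₀, hsub⟩ := mem_nhdsGT_iff_exists_Ioo_subset.1 hbound.bound
  refine ⟨C, x₀, hC, hx₀, fun x hx hxx₀ => ?_⟩
  have h := hsub ⟨hx, hxx₀⟩
  simpa [liouvilleFermiSum, abs_of_pos hx] using h
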